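/- Let (a_n)_{n≥0} be a decreasing sequence of nonnegative real numbers, and let f(z) = ∑_{n=0}^∞ a_n z^n (which is analytic on the unit disc 𝔻 since (a_n) is bounded). Then f belongs to the mean Lipschitz space Λ²_{1/2} if and only if a_n = O(1/n) as n → ∞. -/

import Mathlib

open MeasureTheory Set Metric ENNReal

noncomputable section

namespace PaperHankel

/-- The moment of order `n` of a measure on `[0,1)`:  `μ_n = ∫_{[0,1)} t^n dμ(t)`. -/
def mom (μ : Measure ℝ) (n : ℕ) : ℝ := ∫ t in Ico (0:ℝ) 1, t ^ n ∂μ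

/-- The `n`-th Taylor coefficient of `f` at `0`. -/
def tc (f : ℂ → ℂ) (n : ℕ) : ℂ := iteratedDeriv n f 0 / n.factorial

/-- The `n`-th Taylor coefficient of `H_μ f`, namely `∑_k μ_{n+k} a_k`. -/
def hmuCoeff (μ : Measure ℝ) (f : ℂ → ℂ) (n : ℕ) : ℂ :=
  ∑' k : ℕ, (mom μ (n + k) : ℂ) * tc f k

/-- `H_μ f` is well defined: each coefficient series converges absolutely, and the resulting
power series has radius of convergence at least `1`. -/
def HmuWD (μ : Measure ℝ) (f : ℂ → ℂ) : Prop :=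
  (∀ n : ℕ, Summable fun k : ℕ => ‖(mom μ (n + k) : ℂ) * tc f k‖) ∧
  ∀ z ∈ ball (0:ℂ) 1, Summable fun n : ℕ => ‖hmuCoeff μ f n * z ^ n‖

/-- The generalized Hilbert operator induced by the Hankel matrix of moments of `μ`. -/
def Hmu (μ : Measure ℝ) (f : ℂ → ℂ) : ℂ → ℂ :=
  fun z => ∑' n : ℕ, hmuCoeff μ f n * z ^ n

/-- `I_μ f` is well defined: the defining integral converges absolutely for every `z ∈ 𝔻`. -/
def ImuWD (μ : Measure ℝ) (f : ℂ → ℂ) : Prop :=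
  ∀ z ∈ ball (0:ℂ) 1, IntegrableOn (fun t : ℝ => f t / (1 - t * z)) (Ico (0:ℝ) 1) μ

/-- The integral operator `I_μ f (z) = ∫_{[0,1)} f(t)/(1-tz) dμ(t)`. -/
def Imu (μ : Measure ℝ) (f : ℂ → ℂ) : ℂ → ℂ :=
  fun z => ∫ t in Ico (0:ℝ) 1, f t / (1 - t * z) ∂μ

/-- The `p`-th circle mean `M_p(r,f)` raised into the Hardy norm shape:
`((1/2π) ∫_0^{2π} |f(r e^{iθ})|^p dθ)^{1/p}`. -/
def circMean (p : ℝ) (f : ℂ → ℂ) (r : ℝ) : ℝ :=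
  ((2 * Real.pi)⁻¹ * ∫ θ in (0:ℝ)..(2 * Real.pi),
      ‖f (r * Complex.exp (θ * Complex.I))‖ ^ p) ^ (1 / p)

/-- Membership in the Hardy space `H^p`. -/
def MemHardy (p : ℝ) (f : ℂ → ℂ) : Prop :=
  DifferentiableOn ℂ f (ball (0:ℂ) 1) ∧ ∃ M : ℝ, ∀ r ∈ Ico (0:ℝ) 1, circMean p f r ≤ M

/-- The `H^p` norm. -/
def hardyNorm (p : ℝ) (f : ℂ → ℂ) : ℝ :=
  sSup {x : ℝ | ∃ r ∈ Ico (0:ℝ) 1, x = circMean p f r}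

/-- Membership in `H^∞`: analytic and bounded on the unit disc. -/
def MemHinf (f : ℂ → ℂ) : Prop :=
  DifferentiableOn ℂ f (ball (0:ℂ) 1) ∧ ∃ M : ℝ, ∀ z ∈ ball (0:ℂ) 1, ‖f z‖ ≤ M

/-- The `H^∞` norm. -/
def hinfNorm (f : ℂ → ℂ) : ℝ := sSup {x : ℝ | ∃ z ∈ ball (0:ℂ) 1, x = ‖f z‖}

/-- The mean `M_2(r,g) = ((1/2π) ∫_0^{2π} |g(r e^{iθ})|² dθ)^{1/2}`. -/
def M2 (g : ℂ → ℂ) (r : ℝ) : ℝ :=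
  Real.sqrt ((2 * Real.pi)⁻¹ * ∫ θ in (0:ℝ)..(2 * Real.pi),
      ‖g (r * Complex.exp (θ * Complex.I))‖ ^ 2)

/-- Membership in the mean Lipschitz space `Λ²_{1/2}`:
`M_2(r,f') = O((1-r)^{-1/2})` as `r → 1⁻`. -/
def MemLambda (f : ℂ → ℂ) : Prop :=
  DifferentiableOn ℂ f (ball (0:ℂ) 1) ∧
  ∃ C : ℝ, ∀ r ∈ Ico (0:ℝ) 1, Real.sqrt (1 - r) * M2 (deriv f) r ≤ C

/-- The norm on `Λ²_{1/2}`. -/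
def lambdaNorm (f : ℂ → ℂ) : ℝ :=
  ‖f 0‖ + sSup {x : ℝ | ∃ r ∈ Ico (0:ℝ) 1, x = Real.sqrt (1 - r) * M2 (deriv f) r}

/-- `∫_𝔻 |f'(z)|² g(z,a)^s dA(z)` with `g(z,a) = log |(1- ā z)/(z-a)|` and `dA` the
normalized area measure, computed as a lower integral in `[0,∞]`. -/
def qsInt (s : ℝ) (f : ℂ → ℂ) (a : ℂ) : ℝ≥0∞ :=
  (ENNReal.ofReal Real.pi)⁻¹ * ∫⁻ z in ball (0:ℂ) 1,
    ENNReal.ofReal (‖deriv f z‖ ^ 2 * (Real.log ‖(1 - (starRingEnd ℂ) a * z) / (z - a)‖) ^ s)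

/-- Membership in `Q_s`: analytic on `𝔻` with `ρ_{Q_s}(f)² = sup_{a ∈ 𝔻} ∫ ... < ∞`. -/
def MemQs (s : ℝ) (f : ℂ → ℂ) : Prop :=
  DifferentiableOn ℂ f (ball (0:ℂ) 1) ∧ (⨆ a ∈ ball (0:ℂ) 1, qsInt s f a) < ⊤

/-- The norm on `Q_s`, `‖f‖ = |f(0)| + ρ_{Q_s}(f)`. -/
def qsNorm (s : ℝ) (f : ℂ → ℂ) : ℝ :=
  ‖f 0‖ + Real.sqrt (⨆ a ∈ ball (0:ℂ) 1, qsInt s f a).toReal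

/-- The condition `∫_{[0,1)} tⁿ log(1/(1-t)) dμ(t) = O(1/n)`, stated with the lower
integral so that in particular the integrals are finite. -/
def LogMomentBigO (μ : Measure ℝ) : Prop :=
  ∃ C > 0, ∀ n : ℕ, 1 ≤ n →
    (∫⁻ t in Ico (0:ℝ) 1, ENNReal.ofReal (t ^ n * Real.log (1 / (1 - t))) ∂μ) ≤
      ENNReal.ofReal (C / n)

/-- Membership in the Bloch space. -/
def MemBloch (f : ℂ → ℂ) : Prop :=
  DifferentiableOn ℂ f (ball (0:ℂ) 1) ∧
  ∃ M : ℝ, ∀ z ∈ ball (0:ℂ) 1, (1 - ‖z‖ ^ 2) * ‖deriv f z‖ ≤ M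

/-- The Bloch norm `‖f‖ = |f(0)| + ρ_B(f)`. -/
def blochNorm (f : ℂ → ℂ) : ℝ :=
  ‖f 0‖ + sSup {x : ℝ | ∃ z ∈ ball (0:ℂ) 1, x = (1 - ‖z‖ ^ 2) * ‖deriv f z‖}

/-- Membership in the Besov space `B^p`. -/
def MemBesov (p : ℝ) (f : ℂ → ℂ) : Prop :=
  DifferentiableOn ℂ f (ball (0:ℂ) 1) ∧
  IntegrableOn (fun z : ℂ => (1 - ‖z‖ ^ 2) ^ (p - 2) * ‖deriv f z‖ ^ p) (ball (0:ℂ) 1) volume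

/-- The Besov norm `‖f‖ = |f(0)| + ρ_p(f)`. -/
def besovNorm (p : ℝ) (f : ℂ → ℂ) : ℝ :=
  ‖f 0‖ + (Real.pi⁻¹ *
    ∫ z in ball (0:ℂ) 1, (1 - ‖z‖ ^ 2) ^ (p - 2) * ‖deriv f z‖ ^ p) ^ (1 / p)

/-- `μ` is an `α`-logarithmic `s`-Carleson measure on `[0,1)`. -/
def IsLogCarleson (μ : Measure ℝ) (α s : ℝ) : Prop :=
  ∃ C > 0, ∀ t ∈ Ico (0:ℝ) 1,
    (μ (Ico t 1)).toReal * Real.log (2 / (1 - t)) ^ α ≤ C * (1 - t) ^ s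

/-- `μ` is an `s`-Carleson measure on `[0,1)`. -/
def IsCarleson (μ : Measure ℝ) (s : ℝ) : Prop :=
  ∃ C > 0, ∀ t ∈ Ico (0:ℝ) 1, (μ (Ico t 1)).toReal ≤ C * (1 - t) ^ s


theorem aux_orth (m n : ℕ) : ∫ θ in (0:ℝ)..(2 * Real.pi),
    Complex.exp (θ * Complex.I) ^ m * (starRingEnd ℂ) (Complex.exp (θ * Complex.I) ^ n)
      = if m = n then (2 * Real.pi : ℂ) else 0 := by
  have h1 : ∀ θ : ℝ, Complex.exp (θ * Complex.I) ^ m *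
      (starRingEnd ℂ) (Complex.exp (θ * Complex.I) ^ n)
      = Complex.exp ((((m:ℂ) - n) * Complex.I) * θ) := by
    intro θ
    rw [map_pow, ← Complex.exp_conj, ← Complex.exp_nat_mul, ← Complex.exp_nat_mul,
      ← Complex.exp_add]
    congr 1
    simp
    ring
  simp_rw [h1]
  split_ifs with h
  · subst h; simp
  · have hc : ((m:ℂ) - n) * Complex.I ≠ 0 := by
      refine mul_ne_zero ?_ Complex.I_ne_zero
      rw [sub_ne_zero]; exact_mod_cast h
    rw [integral_exp_mul_complex hc]
    have : Complex.exp ((((m:ℂ) - n) * Complex.I) * ((2 * Real.pi : ℝ) : ℂ)) = 1 := by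
      rw [Complex.exp_eq_one_iff]
      exact ⟨(m:ℤ) - n, by push_cast; ring⟩
    rw [this]; simp

theorem aux_parseval (c : ℕ → ℂ) (hc : Summable fun n => ‖c n‖) (g : ℝ → ℂ)
    (hg : ∀ θ : ℝ, HasSum (fun n => c n * Complex.exp (θ * Complex.I) ^ n) (g θ)) :
    HasSum (fun n => ‖c n‖ ^ 2) ((2 * Real.pi)⁻¹ * ∫ θ in (0:ℝ)..(2 * Real.pi), ‖g θ‖ ^ 2) := by
  have hE : ∀ (n : ℕ), Continuous fun θ : ℝ => Complex.exp (θ * Complex.I) ^ n := by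
    intro n; fun_prop
  have hn : ∀ (n : ℕ) (θ : ℝ), ‖Complex.exp (θ * Complex.I) ^ n‖ = 1 := by
    intro n θ; rw [norm_pow, Complex.norm_exp_ofReal_mul_I, one_pow]
  have hgt : g = fun θ : ℝ => ∑' n, c n * Complex.exp (θ * Complex.I) ^ n := by
    funext θ; exact (hg θ).tsum_eq.symm
  have hgc : Continuous g := by
    rw [hgt]
    refine continuous_tsum (fun n => continuous_const.mul (hE n)) hc ?_
    intro n θ; rw [norm_mul, hn, mul_one]
  have hgb : ∀ θ, ‖g θ‖ ≤ ∑' n, ‖c n‖ := by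
    intro θ
    rw [← (hg θ).tsum_eq]
    refine tsum_of_norm_bounded hc.hasSum ?_
    intro n; rw [norm_mul, hn, mul_one]
  have hpi : (2 * Real.pi : ℂ) ≠ 0 := by
    exact_mod_cast (by positivity : (2 * Real.pi : ℝ) ≠ 0)
  -- coefficient integral
  have hcoef : ∀ n : ℕ, ∫ θ in (0:ℝ)..(2 * Real.pi),
      g θ * (starRingEnd ℂ) (Complex.exp (θ * Complex.I) ^ n) = 2 * Real.pi * c n := by
    intro n
    have h := intervalIntegral.hasSum_integral_of_dominated_convergence
      (a := 0) (b := 2 * Real.pi) (μ := volume)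
      (F := fun m (θ : ℝ) => c m * Complex.exp (θ * Complex.I) ^ m *
        (starRingEnd ℂ) (Complex.exp (θ * Complex.I) ^ n))
      (f := fun θ => g θ * (starRingEnd ℂ) (Complex.exp (θ * Complex.I) ^ n))
      (fun m _ => ‖c m‖)
      (fun m => by
        apply Continuous.aestronglyMeasurable
        exact (continuous_const.mul (hE m)).mul (Complex.continuous_conj.comp (hE n)))
      (fun m => by
        refine Filter.Eventually.of_forall fun θ _ => ?_
        rw [norm_mul, norm_mul, RCLike.norm_conj, hn, hn, mul_one, mul_one])
      (Filter.Eventually.of_forall fun θ _ => hc)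
      (by simp)
      (Filter.Eventually.of_forall fun θ _ => (hg θ).mul_right _)
    have h2 : ∀ m, ∫ θ in (0:ℝ)..(2 * Real.pi), c m * Complex.exp (θ * Complex.I) ^ m *
        (starRingEnd ℂ) (Complex.exp (θ * Complex.I) ^ n)
        = if m = n then 2 * Real.pi * c n else 0 := by
      intro m
      simp_rw [mul_assoc (c m)]
      rw [intervalIntegral.integral_const_mul, aux_orth]
      split_ifs with hmn
      · subst hmn; ring
      · simp
    simp_rw [h2] at h
    exact h.unique (hasSum_ite_eq n _)
  have hmain := intervalIntegral.hasSum_integral_of_dominated_convergence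
      (a := 0) (b := 2 * Real.pi) (μ := volume)
      (F := fun m (θ : ℝ) => g θ * (starRingEnd ℂ) (c m * Complex.exp (θ * Complex.I) ^ m))
      (f := fun θ => g θ * (starRingEnd ℂ) (g θ))
      (fun m _ => (∑' n, ‖c n‖) * ‖c m‖)
      (fun m => by
        apply Continuous.aestronglyMeasurable
        exact hgc.mul (Complex.continuous_conj.comp (continuous_const.mul (hE m))))
      (fun m => by
        refine Filter.Eventually.of_forall fun θ _ => ?_
        rw [norm_mul, RCLike.norm_conj, norm_mul, hn, mul_one]
        exact mul_le_mul_of_nonneg_right (hgb θ) (norm_nonneg _))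
      (Filter.Eventually.of_forall fun θ _ => hc.mul_left _)
      (by simp)
      (Filter.Eventually.of_forall fun θ _ =>
        ((Complex.hasSum_conj'.mpr (by simpa using hg θ))).mul_left _)
  have h3 : ∀ m, ∫ θ in (0:ℝ)..(2 * Real.pi),
      g θ * (starRingEnd ℂ) (c m * Complex.exp (θ * Complex.I) ^ m)
      = ((2 * Real.pi * ‖c m‖ ^ 2 : ℝ) : ℂ) := by
    intro m
    have : ∀ θ : ℝ, g θ * (starRingEnd ℂ) (c m * Complex.exp (θ * Complex.I) ^ m)
       = (starRingEnd ℂ) (c m) * (g θ * (starRingEnd ℂ) (Complex.exp (θ * Complex.I) ^ m)) := by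
      intro θ; rw [map_mul]; ring
    simp_rw [this]
    rw [intervalIntegral.integral_const_mul, hcoef]
    push_cast
    rw [← Complex.mul_conj']
    ring
  have h4 : ∫ θ in (0:ℝ)..(2 * Real.pi), g θ * (starRingEnd ℂ) (g θ)
      = ((∫ θ in (0:ℝ)..(2 * Real.pi), ‖g θ‖ ^ 2 : ℝ) : ℂ) := by
    rw [← intervalIntegral.integral_ofReal]
    congr 1
    funext θ
    rw [Complex.mul_conj']; push_cast; rfl
  simp_rw [h3] at hmain
  rw [h4] at hmain
  have h5 := (Complex.hasSum_ofReal.mp hmain).mul_left (2 * Real.pi)⁻¹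
  have h6 : (fun n => ‖c n‖ ^ 2) = fun i => (2 * Real.pi)⁻¹ * (2 * Real.pi * ‖c i‖ ^ 2) := by
    funext m
    have := Real.pi_pos
    field_simp
  rw [h6]
  exact h5

theorem aux_deriv (a : ℕ → ℝ)
    (hmono : Antitone a) (hnonneg : ∀ n, 0 ≤ a n) (f : ℂ → ℂ)
    (hf : ∀ z ∈ ball (0:ℂ) 1, f z = ∑' n : ℕ, (a n : ℂ) * z ^ n) :
    DifferentiableOn ℂ f (ball (0:ℂ) 1) ∧ ∀ z ∈ ball (0:ℂ) 1,
      HasSum (fun n : ℕ => (((n + 1) * a (n + 1) : ℝ) : ℂ) * z ^ n) (deriv f z) := by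
  have key : ∀ ρ : ℝ, 0 < ρ → ρ < 1 → Summable (fun n : ℕ => a 0 * ρ ^ n) ∧
      (∀ n : ℕ, DifferentiableOn ℂ (fun w : ℂ => (a n : ℂ) * w ^ n) (ball 0 ρ)) ∧
      ∀ (n : ℕ) (w : ℂ), w ∈ ball (0:ℂ) ρ → ‖(a n : ℂ) * w ^ n‖ ≤ a 0 * ρ ^ n := by
    intro ρ h0 h1
    refine ⟨(summable_geometric_of_lt_one h0.le h1).mul_left _, fun n => by fun_prop, ?_⟩
    intro n w hw
    rw [mem_ball_zero_iff] at hw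
    rw [norm_mul, norm_pow, Complex.norm_real, Real.norm_of_nonneg (hnonneg n)]
    exact mul_le_mul (hmono (Nat.zero_le n)) (pow_le_pow_left₀ (norm_nonneg _) hw.le n)
      (by positivity) (hnonneg 0)
  have ev : ∀ z ∈ ball (0:ℂ) 1, f =ᶠ[nhds z] fun w => ∑' n : ℕ, (a n : ℂ) * w ^ n := by
    intro z hz
    filter_upwards [isOpen_ball.mem_nhds hz] with w hw using hf w hw
  have hrho : ∀ z ∈ ball (0:ℂ) 1, ∃ ρ : ℝ, 0 < ρ ∧ ρ < 1 ∧ z ∈ ball (0:ℂ) ρ := by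
    intro z hz
    rw [mem_ball_zero_iff] at hz
    obtain ⟨ρ, h1, h2⟩ := exists_between hz
    exact ⟨ρ, (norm_nonneg _).trans_lt h1, h2, by rwa [mem_ball_zero_iff]⟩
  constructor
  · intro z hz
    obtain ⟨ρ, h0, h1, hzρ⟩ := hrho z hz
    obtain ⟨k1, k2, k3⟩ := key ρ h0 h1
    have := Complex.differentiableOn_tsum_of_summable_norm k1 k2 isOpen_ball k3
    have h := this.differentiableAt (isOpen_ball.mem_nhds hzρ)
    exact ((ev z hz).differentiableAt_iff.mpr h).differentiableWithinAt
  · intro z hz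
    obtain ⟨ρ, h0, h1, hzρ⟩ := hrho z hz
    obtain ⟨k1, k2, k3⟩ := key ρ h0 h1
    have h := Complex.hasSum_deriv_of_summable_norm k1 k2 isOpen_ball k3 hzρ
    rw [← (ev z hz).deriv_eq, ← hasSum_nat_add_iff' 1] at h
    simp at h
    have h6 : (fun n : ℕ => (((n + 1) * a (n + 1) : ℝ) : ℂ) * z ^ n)
        = fun n : ℕ => (a (n + 1) : ℂ) * (((n:ℂ) + 1) * z ^ n) := by
      funext n
      push_cast; ring
    rw [h6]
    exact h

theorem aux_cube (N : ℕ) : (N:ℝ) ^ 3 / 3 ≤ ∑ n ∈ Finset.range N, ((n:ℝ) + 1) ^ 2 := by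
  induction N with
  | zero => simp
  | succ k ih =>
    rw [Finset.sum_range_succ]
    push_cast
    have : (0:ℝ) ≤ k := Nat.cast_nonneg k
    nlinarith

/-- Lemma 3.2: for a decreasing sequence of nonnegative numbers `(a_n)`, the function
`f(z) = ∑ a_n zⁿ` belongs to `Λ²_{1/2}` iff `a_n = O(1/n)`. -/
theorem memLambda_iff_of_antitone (a : ℕ → ℝ)
    (hmono : Antitone a) (hnonneg : ∀ n, 0 ≤ a n) (f : ℂ → ℂ)
    (hf : ∀ z ∈ ball (0:ℂ) 1, f z = ∑' n : ℕ, (a n : ℂ) * z ^ n) :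
    MemLambda f ↔ ∃ C > 0, ∀ n : ℕ, 1 ≤ n → a n ≤ C / n := by
  obtain ⟨hd, hs⟩ := aux_deriv a hmono hnonneg f hf
  have hP : ∀ r ∈ Ico (0:ℝ) 1, ∃ S : ℝ, M2 (deriv f) r = Real.sqrt S ∧
      HasSum (fun n : ℕ => ((n + 1) * a (n + 1)) ^ 2 * (r ^ 2) ^ n) S := by
    intro r hr
    refine ⟨_, rfl, ?_⟩
    have hsum : Summable fun n : ℕ => ‖(((n + 1) * a (n + 1) : ℝ) : ℂ) * (r:ℂ) ^ n‖ := by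
      refine (hs (r:ℂ) ?_).summable.norm
      rw [mem_ball_zero_iff, Complex.norm_real, Real.norm_of_nonneg hr.1]; exact hr.2
    have := aux_parseval (fun n : ℕ => (((n + 1) * a (n + 1) : ℝ) : ℂ) * (r:ℂ) ^ n) hsum
      (fun θ => deriv f (r * Complex.exp (θ * Complex.I))) (by
        intro θ
        have h := hs (r * Complex.exp (θ * Complex.I)) (by
          rw [mem_ball_zero_iff, norm_mul, Complex.norm_exp_ofReal_mul_I, mul_one,
            Complex.norm_real, Real.norm_of_nonneg hr.1]; exact hr.2)
        convert h using 2 with n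
        rw [mul_pow]; ring)
    convert this using 2 with n
    rw [norm_mul, norm_pow, Complex.norm_real, Complex.norm_real, Real.norm_eq_abs,
      Real.norm_eq_abs, mul_pow _ (|r| ^ n), sq_abs, ← pow_mul |r|, mul_comm n 2, pow_mul |r|,
      sq_abs]
  constructor
  · rintro ⟨-, C, hC⟩
    have hC0 : 0 ≤ C := le_trans (mul_nonneg (Real.sqrt_nonneg _) (Real.sqrt_nonneg _))
      (hC 0 ⟨le_rfl, one_pos⟩)
    refine ⟨5 * C + 1, by positivity, ?_⟩
    intro N hN
    have hN' : (1:ℝ) ≤ N := by exact_mod_cast hN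
    have hN0 : (0:ℝ) < N := by linarith
    set r : ℝ := 1 - 1 / (4 * N) with hrdef
    have hq : 1 / (4 * (N:ℝ)) ≤ 1 / 4 := by
      apply one_div_le_one_div_of_le <;> linarith
    have hq0 : 0 < 1 / (4 * (N:ℝ)) := by positivity
    have hr : r ∈ Ico (0:ℝ) 1 := ⟨by linarith, by linarith⟩
    obtain ⟨S, hS, hsum⟩ := hP r hr
    have hS0 : 0 ≤ S := hsum.nonneg fun n => by positivity
    have hle : (1 - r) * S ≤ C ^ 2 := by
      have h := hC r hr
      rw [hS, ← Real.sqrt_mul (by linarith [hr.2])] at h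
      exact (Real.sqrt_le_left hC0).mp h
    have hpow : (1:ℝ) / 2 ≤ (r ^ 2) ^ N := by
      have := one_add_mul_le_pow (a := -(1 / (4 * (N:ℝ)))) (by linarith) (2 * N)
      rw [← pow_mul]
      have e : 1 + -(1 / (4 * (N:ℝ))) = r := by rw [hrdef]; ring
      rw [e] at this
      refine le_trans (le_of_eq ?_) this
      push_cast
      field_simp
      norm_num
    have hr2 : r ^ 2 ≤ 1 := by nlinarith [hr.1, hr.2]
    have hlow : (N:ℝ) ^ 3 / 3 * ((a N) ^ 2 / 2) ≤ S := by
      refine le_trans ?_ (sum_le_hasSum (Finset.range N) (fun n _ => by positivity) hsum)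
      refine le_trans (mul_le_mul_of_nonneg_right (aux_cube N) (by positivity)) ?_
      rw [Finset.sum_mul]
      refine Finset.sum_le_sum fun n hn => ?_
      have hnN := Finset.mem_range.mp hn
      have h1 : a N ≤ a (n + 1) := hmono hnN
      have h2 : (r ^ 2) ^ N ≤ (r ^ 2) ^ n := pow_le_pow_of_le_one (by positivity) hr2 hnN.le
      have h3 : (a N) ^ 2 ≤ (a (n + 1)) ^ 2 := pow_le_pow_left₀ (hnonneg N) h1 2
      rw [mul_pow, mul_assoc, div_eq_mul_one_div (a N ^ 2)]
      exact mul_le_mul_of_nonneg_left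
        (mul_le_mul h3 (hpow.trans h2) (by norm_num) (by positivity)) (by positivity)
    have h1r : 1 - r = 1 / (4 * N) := by rw [hrdef]; ring
    rw [h1r] at hle
    have h6 := (mul_le_mul_of_nonneg_left hlow hq0.le).trans hle
    have h7 : 1 / (4 * (N:ℝ)) * ((N:ℝ) ^ 3 / 3 * ((a N) ^ 2 / 2)) = (a N * N) ^ 2 / 24 := by
      field_simp
      ring
    rw [h7] at h6
    rw [le_div_iff₀ hN0]
    apply le_of_sq_le_sq _ (by positivity)
    nlinarith
  · rintro ⟨C, hC, h⟩
    refine ⟨hd, C, ?_⟩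
    intro r hr
    obtain ⟨S, hS, hsum⟩ := hP r hr
    have h1r : 0 < 1 - r := by linarith [hr.2]
    have hr2 : r ^ 2 ≤ r := by nlinarith [hr.1, hr.2]
    have hgeo := (hasSum_geometric_of_lt_one hr.1 hr.2).mul_left (C ^ 2)
    have hle : S ≤ C ^ 2 * (1 - r)⁻¹ := by
      refine hasSum_le ?_ hsum hgeo
      intro n
      have hn : (0:ℝ) < n + 1 := by positivity
      have h1 := h (n + 1) (by omega)
      push_cast at h1
      rw [le_div_iff₀ hn] at h1
      have h2 : ((n + 1) * a (n + 1)) ^ 2 ≤ C ^ 2 :=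
        pow_le_pow_left₀ (mul_nonneg hn.le (hnonneg _)) (by linarith) 2
      exact mul_le_mul h2 (pow_le_pow_left₀ (by positivity) hr2 n) (by positivity) (by positivity)
    rw [hS, ← Real.sqrt_mul h1r.le]
    apply Real.sqrt_le_iff.mpr ⟨hC.le, ?_⟩
    calc (1 - r) * S ≤ (1 - r) * (C ^ 2 * (1 - r)⁻¹) := mul_le_mul_of_nonneg_left hle h1r.le
      _ = C ^ 2 := by field_simp

end PaperHankel
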